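/- Let 0 < q < 1 and let f ∈ S_q^* with Taylor expansion f(z) = z + Σ_{n≥2} a_n zⁿ on the unit disk. Then there exists a function p in the Carathéodory class P, with Taylor expansion p(z) = 1 + Σ_{n≥1} p_n zⁿ, such that a_2 = p_1 (ln q/(q−1)) and a_3 = p_2 (ln q/(q²−1)) + (p_1²/2)(ln q/(q−1))². -/

import Mathlib

open Complex Metric

noncomputable section

/-- The open unit disk in ℂ. -/
def unitDisk : Set ℂ := ball 0 1

/-- The `q`-difference operator. -/
def Dq (q : ℝ) (f : ℂ → ℂ) (z : ℂ) : ℂ :=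
  if z = 0 then deriv f 0 else (f z - f (q * z)) / (z * (1 - q))

/-- The class `A` of normalized analytic functions on the unit disk. -/
def classA (f : ℂ → ℂ) : Prop :=
  DifferentiableOn ℂ f unitDisk ∧ f 0 = 0 ∧ deriv f 0 = 1

/-- The class of `q`-starlike functions. -/
def SqStar (q : ℝ) (f : ℂ → ℂ) : Prop :=
  classA f ∧ ∀ z ∈ unitDisk,
    ‖z * Dq q f z / f z - 1 / (1 - (q : ℂ))‖ ≤ 1 / (1 - q)

/-- The class of `q`-starlike functions of order `α`. -/
def SqStarAlpha (q α : ℝ) (f : ℂ → ℂ) : Prop :=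
  classA f ∧ ∀ z ∈ unitDisk,
    ‖(z * Dq q f z / f z - (α : ℂ)) / (1 - (α : ℂ)) - 1 / (1 - (q : ℂ))‖
      ≤ 1 / (1 - q)

/-- The class of `q`-convex functions of order `α`. -/
def CqAlpha (q α : ℝ) (f : ℂ → ℂ) : Prop :=
  classA f ∧ SqStarAlpha q α (fun z => z * Dq q f z)

/-- The Carathéodory class `P`. -/
def caratheodory (p : ℂ → ℂ) : Prop :=
  DifferentiableOn ℂ p unitDisk ∧ p 0 = 1 ∧ ∀ z ∈ unitDisk, 0 ≤ (p z).re

/-! On the zero-free part of the disk the defining inequality says `|f (q z)| ≤ |f z|`, and by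
continuity this holds on the whole disk. A zero `z ≠ 0` of `f` would therefore produce the zeros
`q ^ n * z` accumulating at the simple zero `0`, so `f z = z * exp (G z)` with `G` holomorphic. The
inequality `|q z exp (G (q z))| ≤ |z exp (G z)|` then reads `log q + Re (G (q z) - G z) ≤ 0`, and
dividing `log q + G (q z) - G z` by `log q < 0` gives the Carathéodory function `p`. Comparing
coefficients, those of `G` are `p_n log q / (q ^ n - 1)`, and `a_2`, `a_3` are read off from
`exp G`. -/

open Filter Set Topology

section Zeros

variable {𝕜 E F : Type*} [NontriviallyNormedField 𝕜]

theorem norm_le_norm_of_analyticOnNhd_of_ne_zero [SeminormedAddCommGroup E]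
    [NormedAddCommGroup F] [NormedSpace 𝕜 F] {U : Set 𝕜} (hUo : IsOpen U) (hU : IsPreconnected U)
    {f : 𝕜 → E} {g : 𝕜 → F} (hf : ContinuousOn f U) (hg : AnalyticOnNhd 𝕜 g U)
    (hg0 : ∃ w ∈ U, g w ≠ 0) (h : ∀ z ∈ U, g z ≠ 0 → ‖f z‖ ≤ ‖g z‖) {z : 𝕜} (hz : z ∈ U) :
    ‖f z‖ ≤ ‖g z‖ := by
  obtain ⟨w₀, hw₀, hgw₀⟩ := hg0
  have hne : ∀ᶠ w in 𝓝[≠] z, g w ≠ 0 := not_frequently.1 fun hfreq ↦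
    hgw₀ (hg.eqOn_zero_of_preconnected_of_frequently_eq_zero hU hz hfreq hw₀)
  have hfz : Tendsto f (𝓝[≠] z) (𝓝 (f z)) :=
    (hf.continuousAt (hUo.mem_nhds hz)).tendsto.mono_left nhdsWithin_le_nhds
  have hgz : Tendsto g (𝓝[≠] z) (𝓝 (g z)) :=
    (hg z hz).continuousAt.tendsto.mono_left nhdsWithin_le_nhds
  refine le_of_tendsto_of_tendsto hfz.norm hgz.norm ?_
  filter_upwards [hne, nhdsWithin_le_nhds (hUo.mem_nhds hz)] with w hw hwU using h w hwU hw

theorem ne_zero_of_forall_map_mul_eq_zero [Zero F] {q : 𝕜} (hq0 : q ≠ 0) (hq1 : ‖q‖ < 1)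
    {s : Set 𝕜} (hs : MapsTo (q * ·) s s) {f : 𝕜 → F} (hf : ∀ᶠ z in 𝓝[≠] 0, f z ≠ 0)
    (h : ∀ z ∈ s, f z = 0 → f (q * z) = 0) {z : 𝕜} (hz : z ∈ s) (hz0 : z ≠ 0) : f z ≠ 0 := by
  intro hfz
  have hmaps : MapsTo (q * ·) {w ∈ s | f w = 0} {w ∈ s | f w = 0} :=
    fun w hw ↦ ⟨hs hw.1, h w hw.1 hw.2⟩
  have hzero (n : ℕ) : f (q ^ n * z) = 0 := by
    simpa [mul_left_iterate] using (hmaps.iterate n ⟨hz, hfz⟩).2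
  have hlim : Tendsto (fun n : ℕ ↦ q ^ n * z) atTop (𝓝[≠] 0) := by
    refine tendsto_nhdsWithin_iff.2 ⟨?_, .of_forall fun n ↦ mul_ne_zero (pow_ne_zero n hq0) hz0⟩
    simpa using (tendsto_pow_atTop_nhds_zero_of_norm_lt_one hq1).mul_const z
  obtain ⟨n, hn⟩ := (hlim.eventually hf).exists
  exact hn (hzero n)

end Zeros

section Exponential

theorem exists_differentiableOn_eqOn_exp_comp {U : Set ℂ} (hUc : IsSimplyConnected U)
    (hUo : IsOpen U) {g : ℂ → ℂ} (hg : DifferentiableOn ℂ g U) (hg0 : ∀ z ∈ U, g z ≠ 0) :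
    ∃ G : ℂ → ℂ, DifferentiableOn ℂ G U ∧ EqOn (exp ∘ G) g U := by
  obtain ⟨G, hGc, hG⟩ := exists_continuousOn_eqOn_exp_comp hUc hUo hg.continuousOn
    (by simpa using hg0)
  refine ⟨G, fun z hz ↦ ?_, hG⟩
  have hU : U ∈ 𝓝 z := hUo.mem_nhds hz
  have hGz := HasDerivAt.of_comp_left (hGc.continuousAt hU) (hasDerivAt_exp (G z))
    (hg.differentiableAt hU).hasDerivAt (exp_ne_zero (G z)) (hG.eventuallyEq_of_mem hU)
  exact hGz.differentiableAt.differentiableWithinAt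

theorem iteratedDeriv_two_cexp_comp {G : ℂ → ℂ} {z : ℂ} (hG : AnalyticAt ℂ G z) :
    iteratedDeriv 2 (exp ∘ G) z = exp (G z) * (iteratedDeriv 2 G z + deriv G z ^ 2) := by
  have hderiv : deriv (exp ∘ G) =ᶠ[𝓝 z] fun w ↦ exp (G w) * deriv G w := by
    filter_upwards [hG.eventually_analyticAt] with w hw
    exact hw.differentiableAt.hasDerivAt.cexp.deriv
  have hGz : HasDerivAt G (deriv G z) z := hG.differentiableAt.hasDerivAt
  have hG'z : HasDerivAt (deriv G) (deriv (deriv G) z) z := hG.deriv.differentiableAt.hasDerivAt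
  simp only [iteratedDeriv_succ, iteratedDeriv_zero]
  rw [hderiv.deriv_eq, (hGz.cexp.fun_mul hG'z).deriv]
  ring

end Exponential

section Coefficients

/-- The `n`-th Taylor coefficient of `f` at the origin. -/
def taylorCoeff {𝕜 : Type*} [NontriviallyNormedField 𝕜] (f : 𝕜 → 𝕜) (n : ℕ) : 𝕜 :=
  iteratedDeriv n f 0 / n.factorial

theorem hasSum_taylorCoeff {f : ℂ → ℂ} {r : ℝ} (hf : DifferentiableOn ℂ f (ball 0 r)) {z : ℂ}
    (hz : z ∈ ball 0 r) : HasSum (fun n ↦ taylorCoeff f n * z ^ n) (f z) := by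
  convert! hasSum_taylorSeries_on_ball hf hz using 2 with n
  simp only [taylorCoeff, sub_zero, smul_eq_mul]
  ring

theorem coeff_succ_eq_taylorCoeff_dslope {𝕜 : Type*} [NontriviallyNormedField 𝕜]
    [CompleteSpace 𝕜] [CharZero 𝕜] {f : 𝕜 → 𝕜} {a : ℕ → 𝕜}
    (ha : ∀ᶠ z in 𝓝 0, HasSum (fun n ↦ a n * z ^ n) (f z)) (n : ℕ) :
    a (n + 1) = taylorCoeff (dslope f 0) n := by
  have hf : HasFPowerSeriesAt f (.ofScalars 𝕜 a) 0 := by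
    rw [hasFPowerSeriesAt_iff']
    simpa [FormalMultilinearSeries.coeff_ofScalars, mul_comm] using ha
  have hslope := hf.has_fpower_series_dslope_fslope
  have hcoeff := congrArg (·.coeff n)
    (hslope.eq_formalMultilinearSeries hslope.analyticAt.hasFPowerSeriesAt)
  simpa [FormalMultilinearSeries.coeff_ofScalars, taylorCoeff] using hcoeff

theorem taylorCoeff_one_of_eventuallyEq_cexp {g G : ℂ → ℂ} (hG : AnalyticAt ℂ G 0)
    (hg : g =ᶠ[𝓝 0] exp ∘ G) (hg0 : g 0 = 1) : taylorCoeff g 1 = taylorCoeff G 1 := by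
  have hexp : exp (G 0) = 1 := by simpa [hg0] using hg.self_of_nhds.symm
  have hderiv : deriv (exp ∘ G) 0 = deriv G 0 := by
    simpa [hexp, Function.comp_def] using hG.differentiableAt.hasDerivAt.cexp.deriv
  simp [taylorCoeff, hg.deriv_eq, hderiv]

theorem taylorCoeff_two_of_eventuallyEq_cexp {g G : ℂ → ℂ} (hG : AnalyticAt ℂ G 0)
    (hg : g =ᶠ[𝓝 0] exp ∘ G) (hg0 : g 0 = 1) :
    taylorCoeff g 2 = taylorCoeff G 2 + taylorCoeff G 1 ^ 2 / 2 := by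
  have hexp : exp (G 0) = 1 := by simpa [hg0] using hg.self_of_nhds.symm
  simp only [taylorCoeff, hg.iteratedDeriv_eq, iteratedDeriv_two_cexp_comp hG, hexp,
    iteratedDeriv_one, Nat.factorial]
  push_cast
  ring

end Coefficients

theorem isOpen_unitDisk : IsOpen unitDisk := isOpen_ball

theorem convex_unitDisk : Convex ℝ unitDisk := convex_ball 0 1

theorem zero_mem_unitDisk : 0 ∈ unitDisk := mem_ball_self one_pos

theorem unitDisk_mem_nhds_zero : unitDisk ∈ 𝓝 0 := isOpen_unitDisk.mem_nhds zero_mem_unitDisk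

theorem isSimplyConnected_unitDisk : IsSimplyConnected unitDisk :=
  have := convex_unitDisk.contractibleSpace ⟨0, zero_mem_unitDisk⟩
  SimplyConnectedSpace.ofContractible unitDisk

theorem mapsTo_mul_unitDisk {q : ℂ} (hq : ‖q‖ ≤ 1) : MapsTo (q * ·) unitDisk unitDisk := by
  intro z hz
  rw [unitDisk, mem_ball_zero_iff] at hz ⊢
  rw [norm_mul]
  exact (mul_le_of_le_one_left (norm_nonneg z) hq).trans_lt hz

section QLogQuotient

/-- `1 + (G (q z) - G z) / log q`, which is the branch `log (f (q z) / f z) / log q` of the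
logarithm to base `q` when `f z = z * exp (G z)`. -/
def qLogQuotient (q : ℝ) (G : ℂ → ℂ) (z : ℂ) : ℂ :=
  1 + (G (q * z) - G z) / Real.log q

/-- The Taylor coefficients of `qLogQuotient q G` in terms of the coefficients `c` of `G`. -/
def qLogQuotientCoeff (q : ℝ) (c : ℕ → ℂ) (n : ℕ) : ℂ :=
  (if n = 0 then 1 else 0) + c n * (q ^ n - 1) / Real.log q

variable {q : ℝ} {G : ℂ → ℂ} {c : ℕ → ℂ}

theorem qLogQuotientCoeff_zero : qLogQuotientCoeff q c 0 = 1 := by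
  simp [qLogQuotientCoeff]

theorem qLogQuotientCoeff_mul_log_div (hq0 : 0 < q) (hq1 : q < 1) {n : ℕ} (hn : n ≠ 0) :
    qLogQuotientCoeff q c n * ((Real.log q / (q ^ n - 1) : ℝ) : ℂ) = c n := by
  have hlog : (Real.log q : ℂ) ≠ 0 := mod_cast (Real.log_neg hq0 hq1).ne
  have hpow : (q : ℂ) ^ n - 1 ≠ 0 :=
    mod_cast (sub_neg.2 (pow_lt_one₀ hq0.le hq1 hn)).ne
  simp only [qLogQuotientCoeff, if_neg hn, zero_add]
  push_cast
  field_simp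

theorem hasSum_qLogQuotient {z : ℂ} (hz : HasSum (fun n ↦ c n * z ^ n) (G z))
    (hqz : HasSum (fun n ↦ c n * (q * z) ^ n) (G (q * z))) :
    HasSum (fun n ↦ qLogQuotientCoeff q c n * z ^ n) (qLogQuotient q G z) := by
  convert! (hasSum_ite_eq 0 (1 : ℂ)).add ((hqz.sub hz).div_const (Real.log q : ℂ)) using 1
  funext n
  rcases eq_or_ne n 0 with rfl | hn
  · simp [qLogQuotientCoeff]
  · simp only [qLogQuotientCoeff, if_neg hn, mul_pow]
    ring

theorem qLogQuotient_re_nonneg (hq0 : 0 < q) (hq1 : q < 1) {z : ℂ}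
    (h : q * ‖exp (G (q * z))‖ ≤ ‖exp (G z)‖) : 0 ≤ (qLogQuotient q G z).re := by
  have hlog : Real.log q < 0 := Real.log_neg hq0 hq1
  have hre : Real.log q + (G (q * z)).re ≤ (G z).re := by
    rwa [← Real.exp_le_exp, Real.exp_add, Real.exp_log hq0, ← norm_exp, ← norm_exp]
  calc 0 ≤ (Real.log q + (G (q * z)).re - (G z).re) / Real.log q :=
        div_nonneg_of_nonpos (by linarith) hlog.le
    _ = (qLogQuotient q G z).re := by
        rw [qLogQuotient, add_re, one_re, div_ofReal_re, sub_re]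
        field_simp [hlog.ne]
        ring

theorem caratheodory_qLogQuotient (hq0 : 0 < q) (hq1 : q < 1) (hG : DifferentiableOn ℂ G unitDisk)
    (h : ∀ z ∈ unitDisk, q * ‖exp (G (q * z))‖ ≤ ‖exp (G z)‖) :
    caratheodory (qLogQuotient q G) := by
  refine ⟨?_, by simp [qLogQuotient], fun z hz ↦ qLogQuotient_re_nonneg hq0 hq1 (h z hz)⟩
  have hGq : DifferentiableOn ℂ (fun z ↦ G (q * z)) unitDisk :=
    hG.comp (by fun_prop) (mapsTo_mul_unitDisk (by simpa [abs_of_pos hq0] using hq1.le))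
  exact ((hGq.sub hG).div_const _).const_add 1

end QLogQuotient

namespace SqStar

variable {q : ℝ} {f : ℂ → ℂ} {z : ℂ}

theorem norm_map_mul_le_of_ne_zero (hf : SqStar q f) (hq1 : q < 1) (hz : z ∈ unitDisk)
    (hfz : f z ≠ 0) : ‖f (q * z)‖ ≤ ‖f z‖ := by
  obtain ⟨⟨-, hf0, -⟩, hfq⟩ := hf
  have hz0 : z ≠ 0 := by
    rintro rfl
    exact hfz hf0
  have hq : 0 < 1 - q := sub_pos.2 hq1
  have hnorm : ‖1 - (q : ℂ)‖ = 1 - q := by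
    simpa [abs_of_pos hq] using norm_real (1 - q)
  have hqc : 1 - (q : ℂ) ≠ 0 := mod_cast hq.ne'
  have hquot : z * Dq q f z / f z - 1 / (1 - (q : ℂ)) = -(f (q * z) / f z / (1 - (q : ℂ))) := by
    rw [Dq, if_neg hz0]
    field_simp
    ring
  have hle := hfq z hz
  rwa [hquot, norm_neg, norm_div, norm_div, hnorm, div_le_div_iff_of_pos_right hq,
    div_le_one (norm_pos_iff.2 hfz)] at hle

theorem eventually_ne_zero (hf : SqStar q f) : ∀ᶠ z in 𝓝[≠] 0, f z ≠ 0 := by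
  obtain ⟨⟨hfd, -, hf1⟩, -⟩ := hf
  have hderiv := (hfd.differentiableAt unitDisk_mem_nhds_zero).hasDerivAt
  exact hderiv.eventually_ne (by simp [hf1])

theorem norm_map_mul_le (hf : SqStar q f) (hq0 : 0 < q) (hq1 : q < 1) (hz : z ∈ unitDisk) :
    ‖f (q * z)‖ ≤ ‖f z‖ := by
  have hmaps : MapsTo ((q : ℂ) * ·) unitDisk unitDisk :=
    mapsTo_mul_unitDisk (by simpa [abs_of_pos hq0] using hq1.le)
  have hne : ∃ w ∈ unitDisk, f w ≠ 0 :=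
    ((eventually_nhdsWithin_of_eventually_nhds unitDisk_mem_nhds_zero).and
      hf.eventually_ne_zero).exists
  exact norm_le_norm_of_analyticOnNhd_of_ne_zero isOpen_unitDisk convex_unitDisk.isPreconnected
    (hf.1.1.continuousOn.comp (by fun_prop) hmaps) (hf.1.1.analyticOnNhd isOpen_unitDisk) hne
    (fun w hw ↦ hf.norm_map_mul_le_of_ne_zero hq1 hw) hz

theorem ne_zero (hf : SqStar q f) (hq0 : 0 < q) (hq1 : q < 1) (hz : z ∈ unitDisk)
    (hz0 : z ≠ 0) : f z ≠ 0 := by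
  have hq : ‖(q : ℂ)‖ < 1 := by simpa [abs_of_pos hq0] using hq1
  refine ne_zero_of_forall_map_mul_eq_zero (mod_cast hq0.ne') hq (mapsTo_mul_unitDisk hq.le)
    hf.eventually_ne_zero (fun w hw hfw ↦ ?_) hz hz0
  simpa [hfw] using hf.norm_map_mul_le hq0 hq1 hw

theorem dslope_zero (hf : SqStar q f) : dslope f 0 0 = 1 := by
  rw [dslope_same, hf.1.2.2]

theorem mul_dslope (hf : SqStar q f) (z : ℂ) : z * dslope f 0 z = f z := by
  simpa [hf.1.2.1] using sub_smul_dslope f 0 z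

theorem mul_norm_dslope_le (hf : SqStar q f) (hq0 : 0 < q) (hq1 : q < 1) (hz : z ∈ unitDisk) :
    q * ‖dslope f 0 (q * z)‖ ≤ ‖dslope f 0 z‖ := by
  rcases eq_or_ne z 0 with rfl | hz0
  · simpa only [mul_zero, hf.dslope_zero, norm_one, mul_one] using hq1.le
  · refine le_of_mul_le_mul_left ?_ (norm_pos_iff.2 hz0)
    calc ‖z‖ * (q * ‖dslope f 0 (q * z)‖) = ‖q * z * dslope f 0 (q * z)‖ := by
          simp only [norm_mul, norm_real, Real.norm_eq_abs, abs_of_pos hq0]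
          ring
      _ = ‖f (q * z)‖ := by rw [hf.mul_dslope]
      _ ≤ ‖f z‖ := hf.norm_map_mul_le hq0 hq1 hz
      _ = ‖z‖ * ‖dslope f 0 z‖ := by rw [← norm_mul, hf.mul_dslope]

theorem exists_log_dslope (hf : SqStar q f) (hq0 : 0 < q) (hq1 : q < 1) :
    ∃ G : ℂ → ℂ, DifferentiableOn ℂ G unitDisk ∧ EqOn (exp ∘ G) (dslope f 0) unitDisk := by
  refine exists_differentiableOn_eqOn_exp_comp isSimplyConnected_unitDisk isOpen_unitDisk
    ((differentiableOn_dslope unitDisk_mem_nhds_zero).2 hf.1.1) fun z hz ↦ ?_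
  rcases eq_or_ne z 0 with rfl | hz0
  · exact hf.dslope_zero ▸ one_ne_zero
  · exact right_ne_zero_of_mul (hf.mul_dslope z ▸ hf.ne_zero hq0 hq1 hz hz0)

end SqStar

/-- For `f ∈ S_q^*` there is a Carathéodory function `p` expressing `a₂` and `a₃`
in terms of the coefficients `p₁, p₂` of `p`. -/
theorem SqStar_coeffs_via_caratheodory (q : ℝ) (hq0 : 0 < q) (hq1 : q < 1)
    (f : ℂ → ℂ) (hf : SqStar q f) (a : ℕ → ℂ)
    (ha0 : a 0 = 0) (ha1 : a 1 = 1)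
    (ha : ∀ z ∈ unitDisk, HasSum (fun n => a n * z ^ n) (f z)) :
    ∃ (p : ℂ → ℂ) (pc : ℕ → ℂ), caratheodory p ∧ pc 0 = 1 ∧
      (∀ z ∈ unitDisk, HasSum (fun n => pc n * z ^ n) (p z)) ∧
      a 2 = pc 1 * ((Real.log q / (q - 1) : ℝ) : ℂ) ∧
      a 3 = pc 2 * ((Real.log q / (q ^ 2 - 1) : ℝ) : ℂ)
        + pc 1 ^ 2 / 2 * ((Real.log q / (q - 1) : ℝ) : ℂ) ^ 2 := by
  obtain ⟨G, hG, hexp⟩ := hf.exists_log_dslope hq0 hq1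
  have hmaps : MapsTo ((q : ℂ) * ·) unitDisk unitDisk :=
    mapsTo_mul_unitDisk (by simpa [abs_of_pos hq0] using hq1.le)
  have hbound : ∀ z ∈ unitDisk, q * ‖exp (G (q * z))‖ ≤ ‖exp (G z)‖ := by
    intro z hz
    simpa only [← hexp hz, ← hexp (hmaps hz), Function.comp_apply]
      using hf.mul_norm_dslope_le hq0 hq1 hz
  have hG0 : AnalyticAt ℂ G 0 := hG.analyticAt unitDisk_mem_nhds_zero
  have hslope : dslope f 0 =ᶠ[𝓝 0] exp ∘ G :=
    hexp.symm.eventuallyEq_of_mem unitDisk_mem_nhds_zero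
  have hcoeff := coeff_succ_eq_taylorCoeff_dslope (eventually_of_mem unitDisk_mem_nhds_zero ha)
  have hlog_one := qLogQuotientCoeff_mul_log_div (c := taylorCoeff G) hq0 hq1 one_ne_zero
  have hlog_two := qLogQuotientCoeff_mul_log_div (c := taylorCoeff G) hq0 hq1 two_ne_zero
  rw [pow_one] at hlog_one
  refine ⟨qLogQuotient q G, qLogQuotientCoeff q (taylorCoeff G),
    caratheodory_qLogQuotient hq0 hq1 hG hbound, qLogQuotientCoeff_zero,
    fun z hz ↦ hasSum_qLogQuotient (hasSum_taylorCoeff hG hz) (hasSum_taylorCoeff hG (hmaps hz)),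
    ?_, ?_⟩
  · rw [hcoeff 1, taylorCoeff_one_of_eventuallyEq_cexp hG0 hslope hf.dslope_zero, hlog_one]
  · rw [hcoeff 2, taylorCoeff_two_of_eventuallyEq_cexp hG0 hslope hf.dslope_zero, hlog_two,
      div_mul_eq_mul_div, ← mul_pow, hlog_one]
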